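/- arXiv:2004.07581 — 2 statements merged into one kernel-verified Lean document; each statement's English description precedes it below -/
import Mathlib

section
/- (Corollary 3.5.) Let t, z be real numbers with t > 1 and |z| < log t. Then the series ∑_{n≥0} t·E_n(t)·z^{n+1} / ((n+1)!·(1−t)^{n+1}) converges, and its sum equals −z − log(t − e^{−z}) + log(t − 1). (Here t − e^{−z} > 0 under the stated hypotheses, so the logarithm is defined.) -/
/-- The number of descents of a permutation of `Fin n`: indices `i` with
`i+1 < n` and `σ (i+1) < σ i`. -/
noncomputable def descentCount {n : ℕ} (σ : Equiv.Perm (Fin n)) : ℕ :=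
  Nat.card {i : Fin n // ∃ h : (i : ℕ) + 1 < n, σ ⟨(i : ℕ) + 1, h⟩ < σ i}

/-- The Eulerian polynomial `E_n(t) = ∑_{σ ∈ S_n} t^{des σ}`. -/
noncomputable def eulerianPoly (R : Type*) [CommSemiring R] (n : ℕ) : Polynomial R :=
  ∑ σ : Equiv.Perm (Fin n), Polynomial.X ^ descentCount σ

/-!
Inserting a new maximum into the one-line word of `τ ∈ S_n` preserves the number of descents at
`des τ + 1` of the `n + 1` positions and raises it by one at the others. Induction on `n` turns this
into Worpitzky's identity `∑_σ C(k + des σ, n) = k ^ n`. Multiplying by `t⁻ᵏ` and summing over `k`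
gives `∑_k k ^ n t⁻ᵏ = t E_n(t) / (t - 1) ^ (n + 1)` for `1 < ‖t‖`. Hence, with `y = -z`, the series
in question is the double series `∑_n ∑_k y ^ (n + 1) / (n + 1)! * k ^ n * t⁻ᵏ`, which converges
absolutely when `exp ‖y‖ < ‖t‖`. Summing over `n` first leaves `y` for `k = 0` and
`((exp y / t) ^ k - t⁻ᵏ) / k` for `k ≥ 1`, a difference of two logarithmic series.
-/

open Finset

section Words

variable {α : Type*} [LinearOrder α]

/-- The number of descents `w i > w (i + 1)` with `i < m` of an infinite word `w`, so that the
letters involved are `w 0, …, w m`. -/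
def wordDescentCount (w : ℕ → α) (m : ℕ) : ℕ :=
  Nat.count (fun i ↦ w (i + 1) < w i) m

lemma wordDescentCount_insert_max {w w' : ℕ → α} {p m : ℕ} (hpm : p ≤ m)
    (before : ∀ i ≤ p, w' i = w i) (after : ∀ i > p, w' (i + 1) = w i)
    (left : w p ≤ w' (p + 1)) (right : w (p + 1) < w' (p + 1)) :
    wordDescentCount w' (m + 2) + (if w (p + 1) < w p then 1 else 0) =
      wordDescentCount w (m + 1) + 1 := by
  obtain ⟨r, rfl⟩ := Nat.exists_eq_add_of_le hpm
  have prefix_eq : wordDescentCount w' p = wordDescentCount w p := by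
    simp only [wordDescentCount, Nat.count_eq_card_filter_range]
    congr 1
    refine filter_congr fun i hi ↦ ?_
    rw [before i (mem_range.1 hi).le, before (i + 1) (mem_range.1 hi)]
  have suffix_eq (i : ℕ) :
      w' (p + 2 + i + 1) < w' (p + 2 + i) ↔ w (p + 1 + i + 1) < w (p + 1 + i) := by
    rw [after (p + 2 + i) (by lia), show p + 2 + i = p + 1 + i + 1 by ring,
      after (p + 1 + i) (by lia)]
  have no_descent : ¬ w' (p + 1) < w' p := by simpa [before p le_rfl] using left
  have descent : w' (p + 1 + 1) < w' (p + 1) := by simpa [after (p + 1) (by lia)] using right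
  unfold wordDescentCount at prefix_eq ⊢
  rw [show p + r + 2 = p + 2 + r by ring, show p + r + 1 = p + 1 + r by ring,
    Nat.count_add _ (p + 2), Nat.count_add _ (p + 1)]
  simp only [suffix_eq, Nat.count_succ, prefix_eq, if_neg no_descent, if_pos descent]
  ring

end Words

lemma card_filter_fin_eq_count (p : ℕ → Prop) [DecidablePred p] (n : ℕ) :
    #{i : Fin n | p i} = Nat.count p n := by
  rw [Nat.count_eq_card_filter_range, card_filter, card_filter,
    Fin.sum_univ_eq_sum_range (fun i ↦ if p i then 1 else 0)]

section Permutations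

variable {n : ℕ}

/-- The one-line word of `σ`, shifted to positions `1, …, n` and letters `1, …, n`, preceded by
the letter `1` and followed by `0`s. Thus the step at position `0` is a descent only for `n = 0`,
the step at position `n` is always one, and inserting a new maximum anywhere from position `1` to
`n + 1` obeys the same rule, including at both ends and for the empty word. -/
def paddedWord (σ : Equiv.Perm (Fin n)) : ℕ → ℕ
  | 0 => 1
  | i + 1 => if h : i < n then σ ⟨i, h⟩ + 1 else 0

lemma paddedWord_succ_of_lt (σ : Equiv.Perm (Fin n)) {i : ℕ} (h : i < n) :
    paddedWord σ (i + 1) = σ ⟨i, h⟩ + 1 :=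
  dif_pos h

lemma paddedWord_succ_of_le (σ : Equiv.Perm (Fin n)) {i : ℕ} (h : n ≤ i) :
    paddedWord σ (i + 1) = 0 :=
  dif_neg h.not_gt

lemma paddedWord_succ_le (σ : Equiv.Perm (Fin n)) (i : ℕ) : paddedWord σ (i + 1) ≤ n := by
  rcases lt_or_ge i n with h | h
  · exact (paddedWord_succ_of_lt σ h).trans_le (σ _).isLt
  · exact (paddedWord_succ_of_le σ h).trans_le n.zero_le

lemma paddedWord_le (σ : Equiv.Perm (Fin n)) : ∀ i, paddedWord σ i ≤ n + 1
  | 0 => Nat.le_add_left 1 n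
  | i + 1 => (paddedWord_succ_le σ i).trans n.le_succ

lemma descentCount_eq_count (σ : Equiv.Perm (Fin n)) :
    descentCount σ =
      Nat.count (fun i ↦ i + 1 < n ∧ paddedWord σ (i + 2) < paddedWord σ (i + 1)) n := by
  classical
  rw [← card_filter_fin_eq_count, descentCount, Nat.card_eq_fintype_card, Fintype.card_subtype]
  congr 1
  refine filter_congr fun i _ ↦ ?_
  rw [← exists_prop]
  refine exists_congr fun h ↦ ?_
  rw [paddedWord_succ_of_lt σ h, paddedWord_succ_of_lt σ i.isLt, Nat.add_lt_add_iff_right,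
    Fin.lt_def]

lemma wordDescentCount_paddedWord (σ : Equiv.Perm (Fin n)) :
    wordDescentCount (paddedWord σ) (n + 1) = descentCount σ + 1 := by
  rw [descentCount_eq_count, wordDescentCount]
  cases n with
  | zero => simp [Nat.count_one, paddedWord]
  | succ m =>
    have first : ¬ paddedWord σ (0 + 1) < paddedWord σ 0 := by simp [paddedWord]
    have last : paddedWord σ (m + 1 + 1) < paddedWord σ (m + 1) := by simp [paddedWord]
    rw [Nat.count_succ, if_pos last, Nat.count_succ', if_neg first, Nat.count_succ,
      if_neg (by simp), Nat.count_eq_card_filter_range, Nat.count_eq_card_filter_range]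
    congr 3
    refine filter_congr fun i hi ↦ ?_
    simp [mem_range.1 hi]

lemma descentCount_le (σ : Equiv.Perm (Fin n)) : descentCount σ ≤ n :=
  (descentCount_eq_count σ).trans_le (Nat.count_le _)

/-- The permutation whose one-line word is that of `τ` with the new maximum `n` inserted at
position `p`. -/
def insertMax (p : Fin (n + 1)) (τ : Equiv.Perm (Fin n)) : Equiv.Perm (Fin (n + 1)) :=
  (finSuccEquiv' p).trans (τ.optionCongr.trans (finSuccEquiv' (Fin.last n)).symm)

lemma insertMax_self (p : Fin (n + 1)) (τ : Equiv.Perm (Fin n)) :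
    insertMax p τ p = Fin.last n := by
  simp [insertMax]

lemma insertMax_succAbove (p : Fin (n + 1)) (τ : Equiv.Perm (Fin n)) (i : Fin n) :
    insertMax p τ (p.succAbove i) = (τ i).castSucc := by
  simp [insertMax]

lemma insertMax_bijective (n : ℕ) :
    Function.Bijective fun x : Fin (n + 1) × Equiv.Perm (Fin n) ↦ insertMax x.1 x.2 := by
  rw [Fintype.bijective_iff_injective_and_card]
  refine ⟨?_, by simp [Fintype.card_perm, Nat.factorial_succ]⟩
  rintro ⟨p, τ⟩ ⟨q, ρ⟩ (h : insertMax p τ = insertMax q ρ)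
  obtain rfl : p = q := (insertMax q ρ).injective <| by rw [insertMax_self, ← h, insertMax_self]
  congr 1
  ext i
  simpa [insertMax_succAbove] using congr(($h (p.succAbove i) : ℕ))

lemma paddedWord_insertMax_of_le (p : Fin (n + 1)) (τ : Equiv.Perm (Fin n)) :
    ∀ i ≤ (p : ℕ), paddedWord (insertMax p τ) i = paddedWord τ i
  | 0, _ => rfl
  | i + 1, hi => by
    have hin : i < n := by lia
    have hp : p.succAbove ⟨i, hin⟩ = ⟨i, hin.trans n.lt_succ_self⟩ :=
      Fin.succAbove_of_castSucc_lt _ _ hi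
    rw [paddedWord_succ_of_lt _ (hin.trans n.lt_succ_self), paddedWord_succ_of_lt _ hin, ← hp,
      insertMax_succAbove, Fin.val_castSucc]

lemma paddedWord_insertMax_self (p : Fin (n + 1)) (τ : Equiv.Perm (Fin n)) :
    paddedWord (insertMax p τ) (p + 1) = n + 1 := by
  rw [paddedWord_succ_of_lt _ p.isLt, insertMax_self, Fin.val_last]

lemma paddedWord_insertMax_of_gt (p : Fin (n + 1)) (τ : Equiv.Perm (Fin n)) :
    ∀ i > (p : ℕ), paddedWord (insertMax p τ) (i + 1) = paddedWord τ i
  | i + 1, hi => by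
    rcases lt_or_ge i n with hin | hin
    · have hp : p.succAbove ⟨i, hin⟩ = ⟨i + 1, Nat.succ_lt_succ hin⟩ :=
        Fin.succAbove_of_le_castSucc _ _ (Nat.le_of_lt_succ hi)
      rw [paddedWord_succ_of_lt _ (Nat.succ_lt_succ hin), paddedWord_succ_of_lt _ hin, ← hp,
        insertMax_succAbove, Fin.val_castSucc]
    · rw [paddedWord_succ_of_le _ (Nat.succ_le_succ hin), paddedWord_succ_of_le _ hin]

lemma descentCount_insertMax (p : Fin (n + 1)) (τ : Equiv.Perm (Fin n)) :
    descentCount (insertMax p τ) =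
      if paddedWord τ (p + 1) < paddedWord τ p then descentCount τ else descentCount τ + 1 := by
  have h := wordDescentCount_insert_max (Nat.le_of_lt_succ p.isLt)
    (paddedWord_insertMax_of_le p τ) (paddedWord_insertMax_of_gt p τ)
    ((paddedWord_le τ p).trans_eq (paddedWord_insertMax_self p τ).symm)
    (by rw [paddedWord_insertMax_self]; exact Nat.lt_succ_of_le (paddedWord_succ_le τ p))
  rw [wordDescentCount_paddedWord, wordDescentCount_paddedWord] at h
  split_ifs at h ⊢ <;> lia

lemma sum_descentCount_insertMax {M : Type*} [AddCommMonoid M] (τ : Equiv.Perm (Fin n))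
    (g : ℕ → M) :
    ∑ p, g (descentCount (insertMax p τ)) =
      (descentCount τ + 1) • g (descentCount τ) +
        (n - descentCount τ) • g (descentCount τ + 1) := by
  have descents : #{p : Fin (n + 1) | paddedWord τ (p + 1) < paddedWord τ p} =
      descentCount τ + 1 :=
    (card_filter_fin_eq_count (fun i ↦ paddedWord τ (i + 1) < paddedWord τ i) (n + 1)).trans
      (wordDescentCount_paddedWord τ)
  have ascents : #{p : Fin (n + 1) | ¬ paddedWord τ (p + 1) < paddedWord τ p} =
      n - descentCount τ := by
    rw [filter_not, card_sdiff_of_subset (filter_subset _ _), descents, card_univ, Fintype.card_fin,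
      Nat.add_sub_add_right]
  simp only [descentCount_insertMax, apply_ite g, sum_ite, sum_const, descents, ascents]

end Permutations

lemma succ_mul_choose_add_sub_mul_choose (k : ℕ) {d n : ℕ} (hd : d ≤ n) :
    (d + 1) * (k + d).choose (n + 1) + (n - d) * (k + (d + 1)).choose (n + 1) =
      k * (k + d).choose n := by
  obtain ⟨m, rfl⟩ := Nat.exists_eq_add_of_le hd
  have absorption := Nat.choose_succ_right_eq (k + d) (d + m)
  rw [Nat.add_sub_cancel_left, ← add_assoc k, Nat.choose_succ_succ]
  rcases le_or_gt m k with hmk | hkm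
  · rw [Nat.add_comm d m, Nat.add_sub_add_right] at absorption
    obtain ⟨j, rfl⟩ := Nat.exists_eq_add_of_le hmk
    rw [Nat.add_sub_cancel_left, Nat.add_comm m d] at absorption
    linear_combination absorption
  · simp [Nat.choose_eq_zero_of_lt (show k + d < d + m by lia),
      Nat.choose_eq_zero_of_lt (show k + d < d + m + 1 by lia)]

lemma worpitzky_identity (n k : ℕ) :
    ∑ σ : Equiv.Perm (Fin n), (k + descentCount σ).choose n = k ^ n := by
  induction n with
  | zero => simp
  | succ n ih =>
    calc ∑ σ : Equiv.Perm (Fin (n + 1)), (k + descentCount σ).choose (n + 1)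
        = ∑ τ : Equiv.Perm (Fin n), ∑ p,
            (k + descentCount (insertMax p τ)).choose (n + 1) := by
          rw [← (insertMax_bijective n).sum_comp, Fintype.sum_prod_type_right]
      _ = ∑ τ : Equiv.Perm (Fin n), k * (k + descentCount τ).choose n := by
          refine sum_congr rfl fun τ _ ↦ ?_
          rw [sum_descentCount_insertMax τ fun d ↦ (k + d).choose (n + 1), smul_eq_mul,
            smul_eq_mul, succ_mul_choose_add_sub_mul_choose k (descentCount_le τ)]
      _ = k ^ (n + 1) := by rw [← mul_sum, ih, pow_succ']

section EulerianSeries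

variable {𝕜 : Type*} [NormedField 𝕜]

lemma hasSum_add_choose_mul_geometric {d n : ℕ} (hd : d ≤ n) {q : 𝕜} (hq : ‖q‖ < 1) :
    HasSum (fun k : ℕ ↦ ((k + d).choose n : 𝕜) * q ^ k)
      (q ^ (n - d) / (1 - q) ^ (n + 1)) := by
  have initial_terms : ∑ i ∈ range (n - d), ((i + d).choose n : 𝕜) * q ^ i = 0 :=
    sum_eq_zero fun i hi ↦ by
      rw [Nat.choose_eq_zero_of_lt (Nat.add_lt_of_lt_sub (mem_range.1 hi)), Nat.cast_zero, zero_mul]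
  rw [← hasSum_nat_add_iff' (n - d), initial_terms, sub_zero]
  convert! (hasSum_choose_mul_geometric_of_norm_lt_one n hq).mul_left (q ^ (n - d)) using 1
  · funext k
    rw [add_assoc, Nat.sub_add_cancel hd, pow_add]
    ring
  · rw [mul_one_div]

lemma hasSum_pow_mul_inv_pow_eulerianPoly (n : ℕ) {t : 𝕜} (ht : 1 < ‖t‖) :
    HasSum (fun k : ℕ ↦ (k : 𝕜) ^ n * t⁻¹ ^ k)
      (t * (eulerianPoly 𝕜 n).eval t / (t - 1) ^ (n + 1)) := by
  have ht0 : t ≠ 0 := norm_pos_iff.1 (one_pos.trans ht)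
  have term_eq {d : ℕ} (hd : d ≤ n) :
      t⁻¹ ^ (n - d) / (1 - t⁻¹) ^ (n + 1) = t * t ^ d / (t - 1) ^ (n + 1) := by
    rw [show 1 - t⁻¹ = (t - 1) / t by field_simp, div_pow, div_div_eq_mul_div, inv_pow,
      ← pow_sub_mul_pow t (hd.trans n.le_succ), Nat.succ_sub hd, pow_succ t (n - d)]
    field_simp
  have permutation_sum := hasSum_sum (s := univ) fun (σ : Equiv.Perm (Fin n)) _ ↦
    hasSum_add_choose_mul_geometric (descentCount_le σ) (q := t⁻¹)
      (by rw [norm_inv]; exact inv_lt_one_of_one_lt₀ ht)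
  convert! permutation_sum using 1
  · funext k
    rw [← sum_mul, ← Nat.cast_sum, worpitzky_identity, Nat.cast_pow]
  · rw [sum_congr rfl fun σ _ ↦ term_eq (descentCount_le σ), eulerianPoly,
      Polynomial.eval_finsetSum, mul_sum, sum_div]
    simp only [Polynomial.eval_pow, Polynomial.eval_X]

end EulerianSeries

section ExponentialSeries

open Complex

lemma mul_dslope_exp (x : ℂ) : x * dslope exp 0 x = exp x - 1 := by
  simpa using sub_smul_dslope exp 0 x

lemma hasSum_pow_div_factorial_succ (x : ℂ) :
    HasSum (fun n : ℕ ↦ x ^ n / (n + 1).factorial) (dslope exp 0 x) := by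
  rcases eq_or_ne x 0 with rfl | hx
  · rw [dslope_same, Complex.deriv_exp, exp_zero]
    convert! hasSum_single (f := fun n : ℕ ↦ (0 : ℂ) ^ n / (n + 1).factorial) 0
      (fun n hn ↦ by simp [hn]) using 1
    simp
  · have exp_tail := NormedSpace.expSeries_div_hasSum_exp x
    rw [← exp_eq_exp_ℂ, ← hasSum_nat_add_iff' 1] at exp_tail
    convert! exp_tail.div_const x using 1
    · funext n
      rw [pow_succ, mul_div_right_comm, mul_div_cancel_right₀ _ hx]
    · rw [eq_div_iff hx, mul_comm, mul_dslope_exp]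
      simp

variable {y q : ℂ}

lemma summable_pow_div_factorial_mul_pow_mul_pow (hq : ‖q‖ * Real.exp ‖y‖ < 1) :
    Summable fun x : ℕ × ℕ ↦
      y ^ (x.2 + 1) / (x.2 + 1).factorial * ((x.1 : ℂ) ^ x.2 * q ^ x.1) := by
  let bound : ℕ × ℕ → ℝ := fun x ↦
    ‖y‖ * ‖q‖ ^ x.1 * ((x.1 * ‖y‖) ^ x.2 / x.2.factorial)
  have row_sum (k : ℕ) :
      HasSum (fun n ↦ bound (k, n)) (‖y‖ * (‖q‖ * Real.exp ‖y‖) ^ k) := by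
    rw [mul_pow, ← Real.exp_nat_mul, Real.exp_eq_exp_ℝ, ← mul_assoc]
    exact (NormedSpace.expSeries_div_hasSum_exp (k * ‖y‖)).mul_left _
  have bound_summable : Summable bound := by
    rw [summable_prod_of_nonneg fun x ↦ by positivity]
    refine ⟨fun k ↦ (row_sum k).summable, ?_⟩
    simp only [(row_sum _).tsum_eq]
    exact (summable_geometric_of_lt_one (by positivity) hq).mul_left _
  refine .of_norm_bounded bound_summable fun ⟨k, n⟩ ↦ ?_
  calc ‖y ^ (n + 1) / (n + 1).factorial * ((k : ℂ) ^ n * q ^ k)‖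
      = ‖y‖ * ‖q‖ ^ k * ((k * ‖y‖) ^ n / (n + 1).factorial) := by
        simp only [norm_mul, norm_div, norm_pow, norm_natCast]
        ring
    _ ≤ bound (k, n) := by
        dsimp only [bound]
        gcongr
        exact n.le_succ

lemma hasSum_mul_dslope_exp_mul_pow (hq : ‖q‖ < 1) (hqy : ‖q * exp y‖ < 1) :
    HasSum (fun k : ℕ ↦ y * dslope exp 0 (k * y) * q ^ k)
      (y - log (1 - q * exp y) + log (1 - q)) := by
  have log_terms := (hasSum_taylorSeries_neg_log hqy).sub (hasSum_taylorSeries_neg_log hq)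
  rw [← hasSum_nat_add_iff' 1] at log_terms ⊢
  convert! log_terms using 1
  · funext k
    have hk : ((k + 1 : ℕ) : ℂ) ≠ 0 := Nat.cast_ne_zero.2 k.succ_ne_zero
    rw [← sub_div, eq_div_iff hk, mul_pow, ← exp_nat_mul]
    linear_combination q ^ (k + 1) * mul_dslope_exp ((k + 1 : ℕ) * y)
  · simp only [range_one, sum_singleton, Nat.cast_zero, zero_mul, dslope_same, Complex.deriv_exp,
      exp_zero, mul_one, pow_zero, div_zero, sub_self, sub_zero]
    ring

lemma hasSum_pow_div_factorial_mul_tsum_pow_mul_geometric (hq : ‖q‖ * Real.exp ‖y‖ < 1) :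
    HasSum (fun n : ℕ ↦ y ^ (n + 1) / (n + 1).factorial * ∑' k : ℕ, (k : ℂ) ^ n * q ^ k)
      (y - log (1 - q * exp y) + log (1 - q)) := by
  have hq1 : ‖q‖ < 1 :=
    (le_mul_of_one_le_right (norm_nonneg q) (Real.one_le_exp (norm_nonneg y))).trans_lt hq
  have hqy : ‖q * exp y‖ < 1 := by
    rw [norm_mul]
    exact (mul_le_mul_of_nonneg_left (norm_exp_le_exp_norm y) (norm_nonneg q)).trans_lt hq
  have double_sum := (summable_pow_div_factorial_mul_pow_mul_pow hq).hasSum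
  have sum_rows := double_sum.prod_fiberwise (g := fun k : ℕ ↦ y * dslope exp 0 (k * y) * q ^ k)
    fun k ↦ by
      convert! (hasSum_pow_div_factorial_succ (k * y)).mul_left (y * q ^ k) using 1
      · funext n
        ring
      · ring
  have sum_columns := ((Equiv.prodComm ℕ ℕ).hasSum_iff.2 double_sum).prod_fiberwise fun n ↦
    (summable_pow_mul_geometric_of_norm_lt_one n hq1).hasSum.mul_left
      (y ^ (n + 1) / (n + 1).factorial)
  rwa [sum_rows.unique (hasSum_mul_dslope_exp_mul_pow hq1 hqy)] at sum_columns

end ExponentialSeries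

lemma eval_map_eulerianPoly {R S : Type*} [CommSemiring R] [CommSemiring S] (f : R →+* S) (n : ℕ)
    (t : R) : (eulerianPoly S n).eval (f t) = f ((eulerianPoly R n).eval t) := by
  simp [eulerianPoly, Polynomial.eval_finsetSum]

lemma complex_log_one_sub_div {t x : ℝ} (ht : 0 < t) (hx : x < t) :
    Complex.log (1 - x / t) = Real.log (t - x) - Real.log t := by
  have ratio_pos : 0 < (t - x) / t := div_pos (sub_pos.2 hx) ht
  rw [← Complex.ofReal_sub, ← Real.log_div (sub_pos.2 hx).ne' ht.ne',
    Complex.ofReal_log ratio_pos.le, ← one_sub_div ht.ne']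
  norm_cast

theorem eulerian_log_sum_general (t z : ℂ) (hz : ‖z‖ < Real.log ‖t‖) :
    1 - Complex.exp (-z) / t ∈ Complex.slitPlane ∧
    HasSum
      (fun n : ℕ ↦
        t * (eulerianPoly ℂ n).eval t * z ^ (n + 1) /
          ((n + 1).factorial * (1 - t) ^ (n + 1)))
      (-z - Complex.log (1 - Complex.exp (-z) / t) + Complex.log (1 - 1 / t)) := by
  have ht : 1 < ‖t‖ := (Real.log_pos_iff (norm_nonneg t)).1 ((norm_nonneg z).trans_lt hz)
  have hq : ‖t⁻¹‖ * Real.exp ‖-z‖ < 1 := by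
    rw [norm_inv, norm_neg, inv_mul_lt_one₀ (one_pos.trans ht)]
    exact (Real.lt_log_iff_exp_lt (one_pos.trans ht)).1 hz
  have norm_lt : ‖-(Complex.exp (-z) / t)‖ < 1 := by
    rw [norm_neg, div_eq_inv_mul, norm_mul]
    exact (mul_le_mul_of_nonneg_left (Complex.norm_exp_le_exp_norm _) (norm_nonneg _)).trans_lt hq
  refine ⟨sub_eq_add_neg (1 : ℂ) _ ▸ Complex.mem_slitPlane_of_norm_lt_one norm_lt, ?_⟩
  convert! hasSum_pow_div_factorial_mul_tsum_pow_mul_geometric hq using 1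
  · funext n
    have ratio_pow : z ^ (n + 1) / (1 - t) ^ (n + 1) = (-z) ^ (n + 1) / (t - 1) ^ (n + 1) := by
      rw [← div_pow, ← div_pow, ← neg_sub t 1, div_neg, neg_div]
    rw [(hasSum_pow_mul_inv_pow_eulerianPoly n ht).tsum_eq, mul_div_mul_comm, ratio_pow]
    ring
  · rw [div_eq_inv_mul, one_div]

/-- For real `t > 1` and `|z| < log t`, one has `t - e^{-z} > 0` and
`∑_{n≥0} t E_n(t) z^{n+1} / ((n+1)! (1-t)^{n+1}) = -z - log(t - e^{-z}) + log(t-1)`,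
the series converging. -/
theorem eulerian_log_sum (t z : ℝ) (ht : 1 < t) (hz : |z| < Real.log t) :
    0 < t - Real.exp (-z) ∧
    HasSum
      (fun n : ℕ =>
        t * (eulerianPoly ℝ n).eval t * z ^ (n + 1) /
          ((n + 1).factorial * (1 - t) ^ (n + 1)))
      (-z - Real.log (t - Real.exp (-z)) + Real.log (t - 1)) := by
  have ht0 : 0 < t := one_pos.trans ht
  obtain ⟨slit, sum⟩ := eulerian_log_sum_general t z (by simpa [abs_of_pos ht0] using hz)
  have ratio_pos : 0 < 1 - Real.exp (-z) / t := by
    rw [← Complex.ofReal_mem_slitPlane]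
    exact_mod_cast slit
  have hpos : 0 < t - Real.exp (-z) := sub_pos.2 ((div_lt_one ht0).1 (sub_pos.1 ratio_pos))
  refine ⟨hpos, ?_⟩
  have log_one_sub := complex_log_one_sub_div ht0 ht
  have log_one_sub_exp := complex_log_one_sub_div ht0 (sub_pos.1 hpos)
  rw [← Complex.hasSum_ofReal]
  convert! sum using 1
  · funext n
    rw [show (eulerianPoly ℂ n).eval (t : ℂ) = _ from eval_map_eulerianPoly Complex.ofRealHom n t,
      Complex.ofRealHom_eq_coe]
    push_cast
    rfl
  · push_cast at log_one_sub log_one_sub_exp ⊢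
    rw [log_one_sub, log_one_sub_exp]
    ring
end

section
/- (Corollary 3.9.) Let A, B, z, t be real numbers with |t| < exp(−(|A|+|B|)·|z|/2) and sinh((A+B)z/2) ≠ 0. Then exp( ∑_{k≥1} A·B·z²·k·S(kAz)·S(kBz)·t^k ) = ((1 − t·e^{(A−B)z/2})·(1 − t·e^{−(A−B)z/2})) / ((1 − t·e^{(A+B)z/2})·(1 − t·e^{−(A+B)z/2})) = 1 + 4·∑_{k≥1} (sinh(Az/2)·sinh(Bz/2)/sinh((A+B)z/2))·sinh(k(A+B)z/2)·t^k, where both series converge absolutely. -/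
/-- The function `S(x) = sinh(x/2)/(x/2)` for `x ≠ 0`, with `S(0) = 1`. -/
noncomputable def S (x : ℝ) : ℝ := if x = 0 then 1 else Real.sinh (x / 2) / (x / 2)

/-!
Since `x S(x) = 2 sinh (x/2)`, a product-to-sum formula turns the `k`-th term of the first series
into `2 (cosh (k u) - cosh (k v)) t^k / k` with `u = (A + B) z / 2` and `v = (A - B) z / 2`, and
`∑ 2 cosh (k u) t^k / k = -log D(u)` with `D(u) = (1 - t e^u) (1 - t e^{-u})`. Hence the
exponential of the series is `D(v) / D(u)`. Because `D(u) = 1 - 2 t cosh u + t²`, the same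
product-to-sum formula gives `D(v) = D(u) + 4 t sinh (A z / 2) sinh (B z / 2)`, and
`t sinh u / D(u) = ∑ sinh (k u) t^k` is a difference of two geometric series.
-/

open Real

theorem mul_S_eq_two_mul_sinh (x : ℝ) : x * S x = 2 * sinh (x / 2) := by
  unfold S
  split_ifs with hx
  · simp [hx]
  · field_simp

theorem two_mul_sinh_mul_sinh (a b : ℝ) :
    2 * (sinh a * sinh b) = cosh (a + b) - cosh (a - b) := by
  rw [cosh_add, cosh_sub]
  ring

theorem one_sub_mul_exp_mul_one_sub_mul_exp_neg_eq (t u : ℝ) :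
    (1 - t * exp u) * (1 - t * exp (-u)) = 1 - 2 * t * cosh u + t ^ 2 := by
  have hexp : exp u * exp (-u) = 1 := by rw [← exp_add, add_neg_cancel, exp_zero]
  linear_combination t ^ 2 * hexp + 2 * t * cosh_eq u

theorem S_mul_S_eq_cosh_sub_cosh (c x y : ℝ) :
    x * y * c * S (c * x) * S (c * y) =
      2 * cosh (c * ((x + y) / 2)) / c - 2 * cosh (c * ((x - y) / 2)) / c := by
  rcases eq_or_ne c 0 with rfl | hc
  · simp
  have hadd : c * ((x + y) / 2) = c * x / 2 + c * y / 2 := by ring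
  have hsub : c * ((x - y) / 2) = c * x / 2 - c * y / 2 := by ring
  calc x * y * c * S (c * x) * S (c * y)
      = (c * x * S (c * x)) * (c * y * S (c * y)) / c := by field_simp
    _ = 2 * (2 * (sinh (c * x / 2) * sinh (c * y / 2))) / c := by
        rw [mul_S_eq_two_mul_sinh, mul_S_eq_two_mul_sinh]
        ring
    _ = 2 * cosh (c * ((x + y) / 2)) / c - 2 * cosh (c * ((x - y) / 2)) / c := by
        rw [two_mul_sinh_mul_sinh, hadd, hsub]
        ring

theorem one_sub_mul_exp_half_sub_eq_add (t x y : ℝ) :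
    (1 - t * exp ((x - y) / 2)) * (1 - t * exp (-((x - y) / 2))) =
      (1 - t * exp ((x + y) / 2)) * (1 - t * exp (-((x + y) / 2))) +
        4 * (sinh (x / 2) * sinh (y / 2)) * t := by
  have hprod := two_mul_sinh_mul_sinh (x / 2) (y / 2)
  rw [← add_div, ← sub_div] at hprod
  rw [one_sub_mul_exp_mul_one_sub_mul_exp_neg_eq, one_sub_mul_exp_mul_one_sub_mul_exp_neg_eq]
  linear_combination -2 * t * hprod

section GeneratingFunctions

variable {t u : ℝ}

theorem abs_mul_exp_lt_one_iff : |t * exp u| < 1 ↔ |t| < exp (-u) := by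
  rw [abs_mul, abs_exp, exp_neg, ← one_div, lt_div_iff₀ (exp_pos u)]

theorem abs_mul_exp_lt_one (ht : |t| < exp (-|u|)) : |t * exp u| < 1 :=
  abs_mul_exp_lt_one_iff.2 (ht.trans_le (exp_le_exp.2 (neg_le_neg (le_abs_self u))))

theorem abs_mul_exp_neg_lt_one (ht : |t| < exp (-|u|)) : |t * exp (-u)| < 1 :=
  abs_mul_exp_lt_one (by rwa [abs_neg])

theorem one_sub_mul_exp_pos (ht : |t| < exp (-|u|)) : 0 < 1 - t * exp u :=
  sub_pos.2 (abs_lt.1 (abs_mul_exp_lt_one ht)).2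

theorem one_sub_mul_exp_neg_pos (ht : |t| < exp (-|u|)) : 0 < 1 - t * exp (-u) :=
  sub_pos.2 (abs_lt.1 (abs_mul_exp_neg_lt_one ht)).2

theorem one_sub_mul_exp_mul_one_sub_mul_exp_neg_pos (ht : |t| < exp (-|u|)) :
    0 < (1 - t * exp u) * (1 - t * exp (-u)) :=
  mul_pos (one_sub_mul_exp_pos ht) (one_sub_mul_exp_neg_pos ht)

theorem hasSum_sinh_mul_pow (ht : |t| < exp (-|u|)) :
    HasSum (fun k : ℕ ↦ sinh (k * u) * t ^ k)
      (t * sinh u / ((1 - t * exp u) * (1 - t * exp (-u)))) := by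
  have hgeom := ((hasSum_geometric_of_abs_lt_one (abs_mul_exp_lt_one ht)).sub
    (hasSum_geometric_of_abs_lt_one (abs_mul_exp_neg_lt_one ht))).div_const 2
  convert! hgeom using 1
  · ext k
    rw [sinh_eq, mul_pow, mul_pow, ← exp_nat_mul, ← exp_nat_mul, mul_neg]
    ring
  · have hpos := one_sub_mul_exp_pos ht
    have hneg := one_sub_mul_exp_neg_pos ht
    rw [sinh_eq]
    field_simp
    ring

/-- The `k = 0` term vanishes because `x ^ 0 / 0 = 0`. -/
theorem hasSum_pow_div_nat {x : ℝ} (hx : |x| < 1) :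
    HasSum (fun k : ℕ ↦ x ^ k / k) (-log (1 - x)) := by
  rw [← hasSum_nat_add_iff' 1]
  simpa using hasSum_pow_div_log_of_abs_lt_one hx

theorem hasSum_two_mul_cosh_mul_pow_div (ht : |t| < exp (-|u|)) :
    HasSum (fun k : ℕ ↦ 2 * cosh (k * u) * t ^ k / k)
      (-log ((1 - t * exp u) * (1 - t * exp (-u)))) := by
  have hlog := (hasSum_pow_div_nat (abs_mul_exp_lt_one ht)).add
    (hasSum_pow_div_nat (abs_mul_exp_neg_lt_one ht))
  convert! hlog using 1
  · ext k
    rw [cosh_eq, mul_pow, mul_pow, ← exp_nat_mul, ← exp_nat_mul, mul_neg]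
    ring
  · rw [log_mul (one_sub_mul_exp_pos ht).ne' (one_sub_mul_exp_neg_pos ht).ne', neg_add]

end GeneratingFunctions

section ProductFormulas

variable {t x y : ℝ}

theorem hasSum_S_mul_S_mul_pow
    (hadd : |t| < exp (-|(x + y) / 2|)) (hsub : |t| < exp (-|(x - y) / 2|)) :
    HasSum (fun k : ℕ ↦ x * y * k * S (k * x) * S (k * y) * t ^ k)
      (log ((1 - t * exp ((x - y) / 2)) * (1 - t * exp (-((x - y) / 2)))) -
        log ((1 - t * exp ((x + y) / 2)) * (1 - t * exp (-((x + y) / 2))))) := by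
  convert! (hasSum_two_mul_cosh_mul_pow_div hadd).sub
    (hasSum_two_mul_cosh_mul_pow_div hsub) using 1
  · ext k
    rw [S_mul_S_eq_cosh_sub_cosh]
    ring
  · ring

theorem exp_tsum_S_mul_S_mul_pow
    (hadd : |t| < exp (-|(x + y) / 2|)) (hsub : |t| < exp (-|(x - y) / 2|)) :
    exp (∑' k : ℕ, x * y * k * S (k * x) * S (k * y) * t ^ k) =
      (1 - t * exp ((x - y) / 2)) * (1 - t * exp (-((x - y) / 2))) /
        ((1 - t * exp ((x + y) / 2)) * (1 - t * exp (-((x + y) / 2)))) := by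
  rw [(hasSum_S_mul_S_mul_pow hadd hsub).tsum_eq, exp_sub,
    exp_log (one_sub_mul_exp_mul_one_sub_mul_exp_neg_pos hsub),
    exp_log (one_sub_mul_exp_mul_one_sub_mul_exp_neg_pos hadd)]

theorem one_sub_mul_exp_div_eq_one_add_tsum
    (hadd : |t| < exp (-|(x + y) / 2|)) (hs : sinh ((x + y) / 2) ≠ 0) :
    (1 - t * exp ((x - y) / 2)) * (1 - t * exp (-((x - y) / 2))) /
        ((1 - t * exp ((x + y) / 2)) * (1 - t * exp (-((x + y) / 2)))) =
      1 + 4 * ∑' k : ℕ, sinh (x / 2) * sinh (y / 2) / sinh ((x + y) / 2) *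
        (sinh (k * ((x + y) / 2)) * t ^ k) := by
  have hden := (one_sub_mul_exp_mul_one_sub_mul_exp_neg_pos hadd).ne'
  rw [tsum_mul_left, (hasSum_sinh_mul_pow hadd).tsum_eq, one_sub_mul_exp_half_sub_eq_add,
    add_div, div_self hden]
  field_simp

end ProductFormulas

/-- Corollary 3.9: for `|t| < exp(-(|A|+|B|)|z|/2)` and `sinh((A+B)z/2) ≠ 0`,
`exp(∑_{k≥1} A B z² k S(kAz) S(kBz) t^k)` equals the displayed ratio, which in turn
equals `1 + 4 ∑_{k≥1} (sinh(Az/2) sinh(Bz/2) / sinh((A+B)z/2)) sinh(k(A+B)z/2) t^k`;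
both series converge absolutely. -/
theorem exp_sum_S_eq (A B z t : ℝ) (ht : |t| < Real.exp (-((|A| + |B|) * |z| / 2)))
    (hs : Real.sinh ((A + B) * z / 2) ≠ 0) :
    Summable (fun k : ℕ =>
      |A * B * z ^ 2 * (k : ℝ) * S ((k : ℝ) * A * z) * S ((k : ℝ) * B * z) * t ^ k|) ∧
    Summable (fun k : ℕ =>
      |Real.sinh (A * z / 2) * Real.sinh (B * z / 2) / Real.sinh ((A + B) * z / 2) *
        Real.sinh ((k : ℝ) * (A + B) * z / 2) * t ^ k|) ∧
    Real.exp (∑' k : ℕ,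
        A * B * z ^ 2 * (k : ℝ) * S ((k : ℝ) * A * z) * S ((k : ℝ) * B * z) * t ^ k) =
      (1 - t * Real.exp ((A - B) * z / 2)) * (1 - t * Real.exp (-((A - B) * z / 2))) /
        ((1 - t * Real.exp ((A + B) * z / 2)) * (1 - t * Real.exp (-((A + B) * z / 2)))) ∧
    (1 - t * Real.exp ((A - B) * z / 2)) * (1 - t * Real.exp (-((A - B) * z / 2))) /
        ((1 - t * Real.exp ((A + B) * z / 2)) * (1 - t * Real.exp (-((A + B) * z / 2)))) =
      1 + 4 * ∑' k : ℕ,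
          Real.sinh (A * z / 2) * Real.sinh (B * z / 2) / Real.sinh ((A + B) * z / 2) *
            Real.sinh ((k : ℝ) * (A + B) * z / 2) * t ^ k := by
  have ht_of_le {u : ℝ} (hu : |u| ≤ (|A| + |B|) * |z| / 2) : |t| < exp (-|u|) :=
    ht.trans_le (exp_le_exp.2 (neg_le_neg hu))
  have hadd : |t| < exp (-|(A * z + B * z) / 2|) := ht_of_le <| by
    rw [← add_mul, abs_div, abs_mul, abs_two]
    gcongr
    exact abs_add_le A B
  have hsub : |t| < exp (-|(A * z - B * z) / 2|) := ht_of_le <| by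
    rw [← sub_mul, abs_div, abs_mul, abs_two]
    gcongr
    exact abs_sub A B
  have hterm (k : ℕ) : A * B * z ^ 2 * k * S (k * A * z) * S (k * B * z) =
      A * z * (B * z) * k * S (k * (A * z)) * S (k * (B * z)) := by
    ring_nf
  have hmul (k : ℕ) : k * (A + B) * z / 2 = k * ((A * z + B * z) / 2) := by ring
  rw [add_mul] at hs
  simp only [hterm, hmul, add_mul A B z, sub_mul A B z, mul_assoc (_ / _) (sinh _)]
  exact ⟨(hasSum_S_mul_S_mul_pow hadd hsub).summable.abs,
    ((hasSum_sinh_mul_pow hadd).summable.mul_left _).abs,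
    exp_tsum_S_mul_S_mul_pow hadd hsub,
    one_sub_mul_exp_div_eq_one_add_tsum hadd hs⟩
end
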